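/- Let v_i ∈ N be the images of the standard basis vectors, and let Z ⊂ ℂⁿ be the union of the coordinate subspaces {z : z_{i₁} = ⋯ = z_{i_r} = 0} over all subsets {i₁,…,i_r} with {v_{i₁},…,v_{i_r}} linearly dependent. Then for λ a regular value, the projection to the first factor satisfies p₁(μ^{-1}(λ)) ⊆ ℂⁿ ∖ Z; that is, if Σ_i (z_i w_i) u_i = λ with λ regular, then the vectors {v_i : z_i = 0} are linearly independent in N ⊗ ℝ. -/

import Mathlib

/-- Gale duality: if the coordinate functionals indexed by `S` span the dual of a subspace
`V ⊆ Kⁿ`, then the images in `Kⁿ ⧸ V` of the standard basis vectors indexed by the complement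
of `S` are linearly independent. -/
theorem linearIndepOn_compl_mk_single_of_span_proj_eq_top {K ι : Type*} [Field K] [Finite ι]
    [DecidableEq ι] (V : Submodule K (ι → K)) (S : Set ι)
    (hS : Submodule.span K
      ((fun i => (LinearMap.proj i : (ι → K) →ₗ[K] K).comp V.subtype) '' S) = ⊤) :
    LinearIndepOn K (fun i => (Submodule.Quotient.mk (Pi.single i 1) : (ι → K) ⧸ V)) Sᶜ := by
  have hzero (x : V) (hx : ∀ j ∈ S, (x : ι → K) j = 0) : x = 0 := by
    have hle : Submodule.span K
        ((fun i => (LinearMap.proj i : (ι → K) →ₗ[K] K).comp V.subtype) '' S) ≤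
          LinearMap.ker (Module.Dual.eval K V x) := by
      rw [Submodule.span_le]
      rintro _ ⟨j, hj, rfl⟩
      simpa using hx j hj
    ext i
    have hi := hle (hS ▸ Submodule.mem_top :
      (LinearMap.proj i : (ι → K) →ₗ[K] K).comp V.subtype ∈ _)
    simpa using hi
  have hsingle : LinearIndepOn K (fun i => (Pi.single i 1 : ι → K)) Sᶜ :=
    (Pi.linearIndependent_single_one ι K).linearIndepOn _
  refine LinearIndependent.map (f := V.mkQ) hsingle ?_
  rw [Submodule.ker_mkQ, Submodule.disjoint_def]
  intro x hx hxV
  have hvanish : ∀ j ∈ S, x j = 0 := by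
    intro j hj
    have hle : Submodule.span K (Set.range fun i : (Sᶜ : Set ι) => (Pi.single i.1 1 : ι → K)) ≤
        LinearMap.ker (LinearMap.proj j : (ι → K) →ₗ[K] K) := by
      rw [Submodule.span_le]
      rintro _ ⟨i, rfl⟩
      have hne : j ≠ i.1 := fun h => i.2 (h ▸ hj)
      simp [hne]
    exact hle hx
  exact congrArg Subtype.val (hzero ⟨x, hxV⟩ hvanish)

/-- Setup (over `ℂ`): `V' ⊆ ℂⁿ` is the subspace `N'_ℂ` of the exact
sequence `0 → N' → ℤⁿ → N → 0`, so that `N_ℂ = ℂⁿ/V'` with `v_i` the image of `e_i`, and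
dually `M'_ℂ = (V')^*` with `u_i` the restriction of `e_i^*` to `V'`.  If `λ ∈ M'_ℂ` is a
regular value (not contained in the span of any subset of `{u_1, …, u_n}` that fails to
span `M'_ℂ`) and `Σ_i (z_i w_i) u_i = λ`, then the vectors `{v_i : z_i = 0}` are linearly
independent; equivalently, the projection of the hypertoric moment-map fiber `μ⁻¹(λ)` to
the first factor lands in the complement of the coordinate subspace arrangement `Z`. -/
theorem moment_fiber_projects_to_arrangement_complement (n : ℕ)
    (V' : Submodule ℂ (Fin n → ℂ))
    (u : Fin n → Module.Dual ℂ ↥V')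
    (hu : ∀ i, u i = (LinearMap.proj i : (Fin n → ℂ) →ₗ[ℂ] ℂ).comp V'.subtype)
    (v : Fin n → (Fin n → ℂ) ⧸ V')
    (hv : ∀ i, v i = Submodule.Quotient.mk (Pi.single i 1))
    (lam : Module.Dual ℂ ↥V')
    (hreg : ∀ S : Set (Fin n), Submodule.span ℂ (u '' S) ≠ ⊤ →
      lam ∉ Submodule.span ℂ (u '' S))
    (z w : Fin n → ℂ) (hzw : ∑ i, (z i * w i) • u i = lam) :
    LinearIndependent ℂ (fun i : {i : Fin n // z i = 0} => v i.1) := by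
  obtain rfl := funext hu
  obtain rfl := funext hv
  have hmem : lam ∈ Submodule.span ℂ
      ((fun i => (LinearMap.proj i : (Fin n → ℂ) →ₗ[ℂ] ℂ).comp V'.subtype) '' {i | z i ≠ 0}) := by
    rw [← hzw]
    refine Submodule.sum_mem _ fun i _ => ?_
    by_cases hi : z i = 0
    · simp [hi]
    · exact Submodule.smul_mem _ _ (Submodule.subset_span ⟨i, hi, rfl⟩)
  have htop := by_contra fun h => hreg {i | z i ≠ 0} h hmem
  have hind := linearIndepOn_compl_mk_single_of_span_proj_eq_top V' {i | z i ≠ 0} htop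
  have hcompl : {i | z i ≠ 0}ᶜ = {i | z i = 0} := by ext; simp
  rw [hcompl] at hind
  exact hind
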